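/- Let H : ℝ → ℝ be the Heaviside function, H(y) = 1 for y ≥ 0 and H(y) = 0 for y < 0. Then the Gabor wave front set of H equals WF(H) = ( {0} × (ℝ \ {0}) ) ∪ ( { x ∈ ℝ : x > 0 } × {0} ) ⊆ ℝ² \ {0}. -/

import Mathlib

open MeasureTheory

namespace Stmt16

/-- Gaussian-window short-time Fourier transform of `u : ℝ → ℂ`:
`Vu(x,ξ) = ∫ u(y) e^{−iyξ} e^{−(y−x)²} dy`. -/
noncomputable def STFT (u : ℝ → ℂ) (x ξ : ℝ) : ℂ :=
  ∫ y : ℝ, u y * Complex.exp (-(Complex.I) * (y : ℂ) * (ξ : ℂ))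
    * Complex.exp (-(((y - x) ^ 2 : ℝ) : ℂ))

/-- An open cone in `ℝ² \ {0}`. -/
def IsOpenCone (Γ : Set (ℝ × ℝ)) : Prop :=
  IsOpen Γ ∧ (0 : ℝ × ℝ) ∉ Γ ∧ ∀ z ∈ Γ, ∀ r : ℝ, 0 < r → r • z ∈ Γ

/-- The Gabor wave front set of `u : ℝ → ℂ`: the set of `z₀ ∈ ℝ² \ {0}` such that there is
no open cone containing `z₀` on which `Vu` decays faster than any power. -/
def gaborWF (u : ℝ → ℂ) : Set (ℝ × ℝ) :=
  {z | z ≠ 0 ∧ ¬ ∃ Γ : Set (ℝ × ℝ), IsOpenCone Γ ∧ z ∈ Γ ∧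
    ∀ N : ℕ, ∃ M : ℝ, ∀ w ∈ Γ,
      (1 + w.1 ^ 2 + w.2 ^ 2) ^ ((N : ℝ) / 2) * ‖STFT u w.1 w.2‖ ≤ M}

lemma G_norm (x ξ y : ℝ) :
    ‖Complex.exp (-(Complex.I) * (y : ℂ) * (ξ : ℂ)) * Complex.exp (-(((y - x) ^ 2 : ℝ) : ℂ))‖
      = Real.exp (-(y - x) ^ 2) := by
  rw [norm_mul, Complex.norm_exp, Complex.norm_exp, ← Complex.ofReal_neg, Complex.ofReal_re]
  simp

lemma G_int_real (x : ℝ) : Integrable (fun y : ℝ => Real.exp (-(y - x) ^ 2)) := by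
  have := (integrable_exp_neg_mul_sq (b := 1) one_pos).comp_sub_right x
  simpa using this

lemma G_int (x ξ : ℝ) : Integrable (fun y : ℝ =>
    Complex.exp (-(Complex.I) * (y : ℂ) * (ξ : ℂ)) * Complex.exp (-(((y - x) ^ 2 : ℝ) : ℂ))) := by
  refine (G_int_real x).mono' (Continuous.aestronglyMeasurable (by fun_prop)) ?_
  filter_upwards with y
  rw [G_norm]

lemma STFT_H (x ξ : ℝ) : STFT (fun y : ℝ => if 0 ≤ y then (1 : ℂ) else 0) x ξ
    = ∫ y in Set.Ici (0 : ℝ), Complex.exp (-(Complex.I) * (y : ℂ) * (ξ : ℂ))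
        * Complex.exp (-(((y - x) ^ 2 : ℝ) : ℂ)) := by
  rw [STFT, ← integral_indicator measurableSet_Ici]
  congr 1
  ext y
  by_cases h : 0 ≤ y <;> simp [h, Set.indicator]

lemma part_bound (S : Set ℝ) (hS : MeasurableSet S) (x ξ : ℝ) (h : ∀ y ∈ S, y * x ≤ 0) :
    ‖∫ y in S, Complex.exp (-(Complex.I) * (y : ℂ) * (ξ : ℂ))
        * Complex.exp (-(((y - x) ^ 2 : ℝ) : ℂ))‖ ≤ √Real.pi * Real.exp (-x ^ 2) := by
  have h0 : Integrable (fun y : ℝ => Real.exp (-y ^ 2) * Real.exp (-x ^ 2)) := by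
    have := (G_int_real 0).mul_const (Real.exp (-x ^ 2))
    simpa using this
  calc _ ≤ ∫ y in S, Real.exp (-y ^ 2) * Real.exp (-x ^ 2) := by
        refine norm_integral_le_of_norm_le h0.integrableOn ?_
        refine (ae_restrict_iff' hS).2 ?_
        filter_upwards with y hy
        rw [G_norm, ← Real.exp_add]
        apply Real.exp_le_exp.2
        nlinarith [h y hy]
    _ ≤ ∫ y, Real.exp (-y ^ 2) * Real.exp (-x ^ 2) := by
        apply setIntegral_le_integral h0
        filter_upwards with y
        positivity
    _ = _ := by
        rw [integral_mul_const]
        have := integral_gaussian 1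
        simp only [neg_mul, one_mul, div_one] at this
        rw [this]

lemma full_norm (x ξ : ℝ) :
    ‖∫ y : ℝ, Complex.exp (-(Complex.I) * (y : ℂ) * (ξ : ℂ))
        * Complex.exp (-(((y - x) ^ 2 : ℝ) : ℂ))‖ = √Real.pi * Real.exp (-ξ ^ 2 / 4) := by
  have := integral_cexp_quadratic (b := -1) (by simp) (2 * x - Complex.I * ξ) (-(x:ℂ) ^ 2)
  have e : ∀ y : ℝ, Complex.exp (-(Complex.I) * (y : ℂ) * (ξ : ℂ))
        * Complex.exp (-(((y - x) ^ 2 : ℝ) : ℂ))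
      = Complex.exp (-1 * (y:ℂ) ^ 2 + (2 * x - Complex.I * ξ) * y + -(x:ℂ) ^ 2) := by
    intro y
    rw [← Complex.exp_add]
    congr 1
    push_cast
    ring
  simp_rw [e]
  rw [this, norm_mul, Complex.norm_exp]
  have e2 : -(x:ℂ) ^ 2 - (2 * x - Complex.I * ξ) ^ 2 / (4 * -1)
      = ((-ξ ^ 2 / 4 : ℝ) : ℂ) + ((-x * ξ : ℝ) : ℂ) * Complex.I := by
    push_cast
    linear_combination (ξ:ℂ) ^ 2 / 4 * Complex.I_sq
  rw [e2]
  congr 1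
  · rw [neg_neg, div_one, Complex.norm_cpow_eq_rpow_re_of_pos Real.pi_pos, Real.sqrt_eq_rpow]
    norm_num
  · simp only [Complex.add_re, Complex.ofReal_re, Complex.re_ofReal_mul, Complex.I_re, mul_zero,
      add_zero]

lemma bound_neg (x ξ : ℝ) (hx : x ≤ 0) :
    ‖STFT (fun y : ℝ => if 0 ≤ y then (1 : ℂ) else 0) x ξ‖ ≤ √Real.pi * Real.exp (-x ^ 2) := by
  rw [STFT_H]
  exact part_bound _ measurableSet_Ici x ξ fun y hy => mul_nonpos_of_nonneg_of_nonpos hy hx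

lemma bound_pos (x ξ : ℝ) (hx : 0 ≤ x) :
    ‖STFT (fun y : ℝ => if 0 ≤ y then (1 : ℂ) else 0) x ξ‖
      ≤ √Real.pi * Real.exp (-ξ ^ 2 / 4) + √Real.pi * Real.exp (-x ^ 2) := by
  rw [STFT_H]
  have h := integral_add_compl (measurableSet_Ici (a := (0:ℝ))) (G_int x ξ)
  rw [eq_sub_of_add_eq h, ← full_norm x ξ]
  refine (norm_sub_le _ _).trans (add_le_add le_rfl ?_)
  refine part_bound _ measurableSet_Ici.compl x ξ fun y hy => ?_
  simp only [Set.compl_Ici, Set.mem_Iio] at hy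
  exact mul_nonpos_of_nonpos_of_nonneg hy.le hx

lemma decay (u : ℝ → ℂ) (Γ : Set (ℝ × ℝ)) (C c : ℝ) (hc : 0 < c)
    (h : ∀ w ∈ Γ, ‖STFT u w.1 w.2‖ ≤ C * Real.exp (-(c * (w.1 ^ 2 + w.2 ^ 2)))) (N : ℕ) :
    ∃ M : ℝ, ∀ w ∈ Γ, (1 + w.1 ^ 2 + w.2 ^ 2) ^ ((N : ℝ) / 2) * ‖STFT u w.1 w.2‖ ≤ M := by
  refine ⟨(N.factorial / c ^ N) * Real.exp c * C, fun w hw => ?_⟩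
  have hw := h w hw
  set t := 1 + w.1 ^ 2 + w.2 ^ 2 with ht
  have ht1 : 1 ≤ t := by nlinarith [sq_nonneg w.1, sq_nonneg w.2]
  have h1 : t ^ ((N : ℝ) / 2) ≤ t ^ N := by
    rw [← Real.rpow_natCast]
    exact Real.rpow_le_rpow_of_exponent_le ht1 (by linarith [Nat.cast_nonneg (α := ℝ) N])
  have h2 := Real.pow_div_factorial_le_exp (c * t) (by positivity) N
  have h3 : t ^ N ≤ (N.factorial / c ^ N) * Real.exp (c * t) := by
    rw [div_le_iff₀ (by positivity), mul_pow] at h2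
    rw [div_mul_eq_mul_div, le_div_iff₀ (by positivity)]
    linarith
  have e : Real.exp (c * t) * Real.exp (-(c * (w.1 ^ 2 + w.2 ^ 2))) = Real.exp c := by
    rw [← Real.exp_add]; congr 1; rw [ht]; ring
  calc _ ≤ ((N.factorial / c ^ N) * Real.exp (c * t))
            * (C * Real.exp (-(c * (w.1 ^ 2 + w.2 ^ 2)))) := by
        apply mul_le_mul (h1.trans h3) hw (norm_nonneg _) (by positivity)
    _ = (N.factorial / c ^ N) * (Real.exp (c * t) * Real.exp (-(c * (w.1 ^ 2 + w.2 ^ 2)))) * C := by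
        ring
    _ = _ := by rw [e]

lemma notin_neg (z : ℝ × ℝ) (hz : z.1 < 0) :
    z ∉ gaborWF (fun y : ℝ => if 0 ≤ y then (1 : ℂ) else 0) := by
  rintro ⟨-, h⟩
  apply h
  have hz2 : 0 < z.1 ^ 2 := by nlinarith
  obtain ⟨K, hK, hK0⟩ : ∃ K : ℝ, z.2 ^ 2 < K * z.1 ^ 2 ∧ 0 < K := by
    refine ⟨z.2 ^ 2 / z.1 ^ 2 + 1, ?_, by positivity⟩
    rw [add_mul, div_mul_cancel₀ _ hz2.ne']
    linarith
  refine ⟨{w | w.1 < 0 ∧ w.2 ^ 2 < K * w.1 ^ 2}, ⟨?_, ?_, ?_⟩, ⟨hz, hK⟩, ?_⟩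
  · exact (isOpen_lt (f := fun w : ℝ × ℝ => w.1) (g := fun _ => 0) (by fun_prop)
      (by fun_prop)).inter (isOpen_lt (f := fun w : ℝ × ℝ => w.2 ^ 2)
      (g := fun w : ℝ × ℝ => K * w.1 ^ 2) (by fun_prop) (by fun_prop))
  · simp
  · rintro w ⟨h1, h2⟩ r hr
    refine ⟨by simpa using mul_neg_of_pos_of_neg hr h1, ?_⟩
    have : 0 < r ^ 2 := by positivity
    simp only [Prod.smul_snd, Prod.smul_fst, smul_eq_mul, mul_pow]
    nlinarith
  · refine decay _ _ (√Real.pi) (1 / (1 + K)) (by positivity) ?_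
    rintro w ⟨h1, h2⟩
    refine (bound_neg _ _ h1.le).trans ?_
    gcongr
    rw [div_mul_eq_mul_div, div_le_iff₀ (by positivity)]
    linarith

lemma notin_pos (z : ℝ × ℝ) (hz : 0 < z.1) (hz' : z.2 ≠ 0) :
    z ∉ gaborWF (fun y : ℝ => if 0 ≤ y then (1 : ℂ) else 0) := by
  rintro ⟨-, h⟩
  apply h
  have hz1 : 0 < z.1 ^ 2 := by positivity
  have hz2 : 0 < z.2 ^ 2 := by positivity
  obtain ⟨K, hK, hK', hK0⟩ : ∃ K : ℝ, z.2 ^ 2 < K * z.1 ^ 2 ∧ z.1 ^ 2 < K * z.2 ^ 2 ∧ 0 < K := by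
    have p1 : 0 < z.2 ^ 2 / z.1 ^ 2 := by positivity
    have p2 : 0 < z.1 ^ 2 / z.2 ^ 2 := by positivity
    refine ⟨z.2 ^ 2 / z.1 ^ 2 + z.1 ^ 2 / z.2 ^ 2, ?_, ?_, by positivity⟩
    · rw [add_mul, div_mul_cancel₀ _ hz1.ne']
      nlinarith
    · rw [add_mul, div_mul_cancel₀ _ hz2.ne']
      nlinarith
  refine ⟨{w | 0 < w.1 ∧ w.2 ^ 2 < K * w.1 ^ 2 ∧ w.1 ^ 2 < K * w.2 ^ 2}, ⟨?_, ?_, ?_⟩,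
    ⟨hz, hK, hK'⟩, ?_⟩
  · exact (isOpen_lt (f := fun _ : ℝ × ℝ => 0) (g := fun w : ℝ × ℝ => w.1) (by fun_prop)
      (by fun_prop)).inter ((isOpen_lt (f := fun w : ℝ × ℝ => w.2 ^ 2)
      (g := fun w : ℝ × ℝ => K * w.1 ^ 2) (by fun_prop) (by fun_prop)).inter
      (isOpen_lt (f := fun w : ℝ × ℝ => w.1 ^ 2)
      (g := fun w : ℝ × ℝ => K * w.2 ^ 2) (by fun_prop) (by fun_prop)))
  · simp
  · rintro w ⟨h1, h2, h3⟩ r hr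
    have : 0 < r ^ 2 := by positivity
    refine ⟨by simpa using mul_pos hr h1, ?_, ?_⟩
    · simp only [Prod.smul_snd, Prod.smul_fst, smul_eq_mul, mul_pow]
      nlinarith
    · simp only [Prod.smul_snd, Prod.smul_fst, smul_eq_mul, mul_pow]
      nlinarith
  · refine decay _ _ (√Real.pi + √Real.pi) (1 / (4 * (1 + K))) (by positivity) ?_
    rintro w ⟨h1, h2, h3⟩
    refine (bound_pos _ _ h1.le).trans ?_
    rw [add_mul]
    have q : 1 / (4 * (1 + K)) * (w.1 ^ 2 + w.2 ^ 2) = (w.1 ^ 2 + w.2 ^ 2) / (4 * (1 + K)) := by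
      ring
    rw [q]
    have b1 : (w.1 ^ 2 + w.2 ^ 2) / (4 * (1 + K)) ≤ w.2 ^ 2 / 4 := by
      rw [div_le_iff₀ (by positivity)]
      linarith
    have b2 : (w.1 ^ 2 + w.2 ^ 2) / (4 * (1 + K)) ≤ w.1 ^ 2 := by
      rw [div_le_iff₀ (by positivity)]
      nlinarith [mul_nonneg hK0.le (sq_nonneg w.1), sq_nonneg w.1]
    gcongr
    linarith

lemma lower_x (x : ℝ) (hx : 0 ≤ x) :
    Real.exp (-1) ≤ ‖STFT (fun y : ℝ => if 0 ≤ y then (1 : ℂ) else 0) x 0‖ := by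
  rw [STFT_H]
  have e : ∀ y : ℝ, Complex.exp (-(Complex.I) * (y : ℂ) * ((0:ℝ) : ℂ))
        * Complex.exp (-(((y - x) ^ 2 : ℝ) : ℂ)) = ((Real.exp (-(y - x) ^ 2) : ℝ) : ℂ) := by
    intro y
    simp
  simp_rw [e]
  rw [integral_complex_ofReal, Complex.norm_real]
  refine le_trans ?_ (le_abs_self _)
  calc Real.exp (-1) = ∫ y in Set.Icc x (x + 1), Real.exp (-1) := by simp
    _ ≤ ∫ y in Set.Icc x (x + 1), Real.exp (-(y - x) ^ 2) := by
        refine setIntegral_mono_on (by simp) (G_int_real x).integrableOn measurableSet_Icc ?_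
        rintro y ⟨h1, h2⟩
        apply Real.exp_le_exp.2
        nlinarith
    _ ≤ _ := by
        refine setIntegral_mono_set (G_int_real x).integrableOn ?_ ?_
        · filter_upwards with y
          positivity
        · apply LE.le.eventuallyLE
          intro y hy
          exact hx.trans hy.1

open Filter Topology

lemma mem_x (z : ℝ × ℝ) (hz : 0 < z.1) (hz' : z.2 = 0) :
    z ∈ gaborWF (fun y : ℝ => if 0 ≤ y then (1 : ℂ) else 0) := by
  refine ⟨fun h => by simp [h] at hz, ?_⟩
  rintro ⟨Γ, ⟨-, -, hΓ⟩, hzΓ, hb⟩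
  obtain ⟨M, hM⟩ := hb 2
  have hr : ∀ r : ℝ, 0 < r → r ^ 2 * z.1 ^ 2 * Real.exp (-1) ≤ M := by
    intro r hr
    have h1 := hM _ (hΓ z hzΓ r hr)
    simp only [Prod.smul_fst, Prod.smul_snd, smul_eq_mul, hz', mul_zero] at h1
    have h2 := lower_x (r * z.1) (by positivity)
    norm_num at h1
    refine le_trans ?_ h1
    apply mul_le_mul _ h2 (by positivity) (by positivity)
    nlinarith
  have : Tendsto (fun r : ℝ => r ^ 2 * (z.1 ^ 2 * Real.exp (-1))) atTop atTop :=
    (tendsto_pow_atTop (by norm_num)).atTop_mul_const (by positivity)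
  obtain ⟨r, h1, h2⟩ := ((this.eventually_gt_atTop M).and (eventually_gt_atTop 0)).exists
  linarith [hr r h2]

lemma yint : Integrable (fun y : ℝ => (y : ℂ) * Complex.exp (-(y : ℂ) ^ 2)) := by
  have := integrable_mul_cexp_neg_mul_sq (b := 1) (by simp)
  simpa using this

lemma ibp (ξ : ℝ) :
    (Complex.I * ξ) * STFT (fun y : ℝ => if 0 ≤ y then (1 : ℂ) else 0) 0 ξ
    + 2 * ∫ y in Set.Ioi (0:ℝ), Complex.exp (-(Complex.I) * (y : ℂ) * (ξ : ℂ))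
        * ((y : ℂ) * Complex.exp (-(y : ℂ) ^ 2)) = 1 := by
  rw [STFT_H, integral_Ici_eq_integral_Ioi]
  have i1 := (G_int 0 ξ).integrableOn (s := Set.Ioi 0)
  have i2 : IntegrableOn (fun y : ℝ => Complex.exp (-(Complex.I) * (y : ℂ) * (ξ : ℂ))
        * ((y : ℂ) * Complex.exp (-(y : ℂ) ^ 2))) (Set.Ioi 0) := by
    apply Integrable.integrableOn
    refine yint.norm.mono' (Continuous.aestronglyMeasurable (by fun_prop)) ?_
    filter_upwards with y
    rw [norm_mul, Complex.norm_exp]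
    simp
  rw [← integral_const_mul, ← integral_const_mul, ← integral_add (i1.const_mul _) (i2.const_mul _)]
  have hd : ∀ y ∈ Set.Ici (0:ℝ), HasDerivAt (fun y : ℝ =>
      -(Complex.exp (-(Complex.I) * (y : ℂ) * (ξ : ℂ)) * Complex.exp (-(((y - 0) ^ 2 : ℝ) : ℂ))))
      (Complex.I * ξ * (Complex.exp (-(Complex.I) * (y : ℂ) * (ξ : ℂ))
        * Complex.exp (-(((y - 0) ^ 2 : ℝ) : ℂ)))
      + 2 * (Complex.exp (-(Complex.I) * (y : ℂ) * (ξ : ℂ))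
        * ((y : ℂ) * Complex.exp (-(y : ℂ) ^ 2)))) y := by
    intro y _
    have h0 : HasDerivAt (fun y : ℝ => (y : ℂ)) 1 y := Complex.ofRealCLM.hasDerivAt
    have h1 := ((h0.const_mul (-Complex.I)).mul_const (ξ : ℂ)).cexp
    have h2 := (h0.pow 2).neg.cexp
    have h3 := (h1.mul h2).neg
    simp only [sub_zero, Complex.ofReal_pow]
    refine HasDerivAt.congr_deriv h3 ?_
    simp only [Pi.neg_apply, Pi.pow_apply]
    push_cast
    ring
  have ht : Tendsto (fun y : ℝ =>
      -(Complex.exp (-(Complex.I) * (y : ℂ) * (ξ : ℂ)) * Complex.exp (-(((y - 0) ^ 2 : ℝ) : ℂ))))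
      atTop (𝓝 0) := by
    rw [tendsto_zero_iff_norm_tendsto_zero]
    simp_rw [norm_neg, G_norm, sub_zero]
    exact Real.tendsto_exp_neg_atTop_nhds_zero.comp (tendsto_pow_atTop (by norm_num))
  have := integral_Ioi_of_hasDerivAt_of_tendsto' hd
    ((i1.const_mul _).add (i2.const_mul _)) ht
  refine this.trans ?_
  simp

lemma RL (c : ℝ) (hc : c ≠ 0) : Tendsto (fun r : ℝ =>
    ∫ y in Set.Ioi (0:ℝ), Complex.exp (-(Complex.I) * (y : ℂ) * ((r * c : ℝ) : ℂ))
        * ((y : ℂ) * Complex.exp (-(y : ℂ) ^ 2))) atTop (𝓝 0) := by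
  have h := Real.tendsto_integral_exp_smul_cocompact
    ((Set.Ioi (0:ℝ)).indicator (fun y : ℝ => (y : ℂ) * Complex.exp (-(y : ℂ) ^ 2)))
  have hs : Tendsto (fun r : ℝ => r * (c / (2 * Real.pi))) atTop (cocompact ℝ) := by
    have : c / (2 * Real.pi) ≠ 0 := by positivity
    refine Tendsto.mono_left ?_ atTop_le_cocompact
    exact (Homeomorph.mulRight₀ _ this).isClosedEmbedding.tendsto_cocompact
  refine (h.comp hs).congr fun r => ?_
  simp only [Function.comp]
  rw [← integral_indicator measurableSet_Ioi]
  congr 1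
  ext y
  by_cases hy : y ∈ Set.Ioi (0:ℝ)
  · simp only [Set.indicator_of_mem hy, Circle.smul_def, Real.fourierChar_apply, smul_eq_mul]
    congr 2
    push_cast
    have : (Real.pi : ℂ) ≠ 0 := by exact_mod_cast Real.pi_ne_zero
    field_simp
  · simp [Set.indicator_of_notMem hy]

lemma mem_xi (z : ℝ × ℝ) (hz : z.1 = 0) (hz' : z.2 ≠ 0) :
    z ∈ gaborWF (fun y : ℝ => if 0 ≤ y then (1 : ℂ) else 0) := by
  refine ⟨fun h => hz' (by simp [h]), ?_⟩
  rintro ⟨Γ, ⟨-, -, hΓ⟩, hzΓ, hb⟩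
  obtain ⟨M, hM⟩ := hb 2
  have hr : ∀ r : ℝ, 0 < r → ‖(Complex.I * ((r * z.2 : ℝ) : ℂ)) *
      STFT (fun y : ℝ => if 0 ≤ y then (1 : ℂ) else 0) 0 (r * z.2)‖ ≤ M / |z.2| * r⁻¹ := by
    intro r hr
    have h1 := hM _ (hΓ z hzΓ r hr)
    simp only [Prod.smul_fst, Prod.smul_snd, smul_eq_mul, hz, mul_zero] at h1
    norm_num at h1
    rw [norm_mul, norm_mul, Complex.norm_I, one_mul, Complex.norm_real, Real.norm_eq_abs,
      abs_mul, abs_of_pos hr, ← div_eq_mul_inv, div_div, le_div_iff₀ (by positivity)]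
    refine le_trans ?_ h1
    set v := ‖STFT (fun y : ℝ => if 0 ≤ y then (1 : ℂ) else 0) 0 (r * z.2)‖
    have hv : 0 ≤ v := norm_nonneg _
    have : r * |z.2| * v * (|z.2| * r) = (r * z.2) ^ 2 * v := by
      rw [mul_pow, ← sq_abs z.2]; ring
    rw [this]
    nlinarith
  have t1 : Tendsto (fun r : ℝ => (Complex.I * ((r * z.2 : ℝ) : ℂ)) *
      STFT (fun y : ℝ => if 0 ≤ y then (1 : ℂ) else 0) 0 (r * z.2)) atTop (𝓝 0) := by
    apply squeeze_zero_norm' (a := fun r : ℝ => M / |z.2| * r⁻¹)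
    · filter_upwards [eventually_gt_atTop 0] with r h using hr r h
    · simpa using tendsto_inv_atTop_zero.const_mul (M / |z.2|)
  have t2 := t1.add ((RL z.2 hz').const_mul 2)
  simp_rw [ibp] at t2
  have := tendsto_nhds_unique t2 tendsto_const_nhds
  simp at this

/-- Proposition: Gabor wave front set of the Heaviside function.  With
`H(y) = 1` for `y ≥ 0` and `H(y) = 0` for `y < 0`,
`WF(H) = ({0} × (ℝ \ {0})) ∪ (ℝ₊ × {0})`. -/
theorem stmt_16 :
    gaborWF (fun y : ℝ => if 0 ≤ y then (1 : ℂ) else 0)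
      = {z : ℝ × ℝ | z.1 = 0 ∧ z.2 ≠ 0} ∪ {z : ℝ × ℝ | 0 < z.1 ∧ z.2 = 0} := by
  ext z
  constructor
  · intro h
    rcases lt_trichotomy z.1 0 with h1 | h1 | h1
    · exact absurd h (notin_neg z h1)
    · exact Or.inl ⟨h1, fun h2 => h.1 (Prod.ext h1 h2)⟩
    · by_cases h2 : z.2 = 0
      · exact Or.inr ⟨h1, h2⟩
      · exact absurd h (notin_pos z h1 h2)
  · rintro (⟨h1, h2⟩ | ⟨h1, h2⟩)
    · exact mem_xi z h1 h2
    · exact mem_x z h1 h2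

end Stmt16
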